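/- arXiv:1902.03755 — 2 statements merged into one kernel-verified Lean document; each statement's English description precedes it below -/
import Mathlib

section
/- Let n, d, k be positive integers, X ∈ ℝ^{n×d}, and let p₁, p₂, q₁, q₂ ∈ [1,∞] with p₂ ≤ q₂, and let p₁' ∈ [1,∞] be the Hölder conjugate of p₁ (1/p₁ + 1/p₁' = 1). Then sup{ Σ_{i=1}^d ‖X(:,i)‖_{q₁} · ‖U(i,:)‖_{q₂} : U ∈ ℝ^{d×k}, ‖U‖_{p₁×p₂} ≤ 1 } = ‖Xᵀ‖_{p₁'×q₁}, where ‖Xᵀ‖_{p₁'×q₁} = ( Σ_{i=1}^d ‖X(:,i)‖_{q₁}^{p₁'} )^{1/p₁'} (sup convention for p₁' = ∞), and the supremum is attained. -/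
open scoped ENNReal BigOperators
open Matrix

/-- The `ℓ_p` norm of a finitely-indexed real vector, `p ∈ [1,∞]`
(with the sup convention for `p = ∞`). -/
noncomputable def lpNorm {ι : Type*} [Fintype ι] (p : ℝ≥0∞) (v : ι → ℝ) : ℝ :=
  if p = ∞ then ⨆ i, |v i| else (∑ i, |v i| ^ p.toReal) ^ (1 / p.toReal)

/-- The mixed norm `‖A‖_{p×q}`: the `ℓ_p` norm of the vector of `ℓ_q` norms of the rows. -/
noncomputable def mixedNorm {ι κ : Type*} [Fintype ι] [Fintype κ]
    (p q : ℝ≥0∞) (A : Matrix ι κ ℝ) : ℝ :=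
  lpNorm p (fun i => lpNorm q (A i))

lemma lpN_nonneg {ι : Type*} [Fintype ι] (p : ℝ≥0∞) (v : ι → ℝ) : 0 ≤ lpNorm p v := by
  unfold lpNorm
  split_ifs
  · exact Real.iSup_nonneg fun i => abs_nonneg _
  · positivity

lemma toReal_pos_aux {p : ℝ≥0∞} (hp : 1 ≤ p) (h : p ≠ ∞) : 0 < p.toReal :=
  ENNReal.toReal_pos (by rintro rfl; simp at hp) h

lemma lpN_top {ι : Type*} [Fintype ι] (v : ι → ℝ) : lpNorm ∞ v = ⨆ i, |v i| := by
  simp [lpNorm]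

lemma lpN_one {ι : Type*} [Fintype ι] (v : ι → ℝ) : lpNorm 1 v = ∑ i, |v i| := by
  simp [lpNorm]

lemma lpN_pow {ι : Type*} [Fintype ι] {p : ℝ≥0∞} (hp : 1 ≤ p) (h : p ≠ ∞) (v : ι → ℝ) :
    lpNorm p v ^ p.toReal = ∑ i, |v i| ^ p.toReal := by
  have := toReal_pos_aux hp h
  rw [lpNorm, if_neg h, ← Real.rpow_mul (by positivity), one_div_mul_cancel this.ne',
    Real.rpow_one]

lemma abs_le_lpN {ι : Type*} [Fintype ι] {p : ℝ≥0∞} (hp : 1 ≤ p) (v : ι → ℝ) (i : ι) :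
    |v i| ≤ lpNorm p v := by
  by_cases h : p = ∞
  · subst h
    rw [lpN_top]
    exact le_ciSup (f := fun i => |v i|) (Set.finite_range _).bddAbove i
  · have h0 := toReal_pos_aux hp h
    rw [← Real.rpow_le_rpow_iff (abs_nonneg _) (lpN_nonneg _ _) h0, lpN_pow hp h]
    exact Finset.single_le_sum (f := fun i => |v i| ^ p.toReal)
      (fun i _ => by positivity) (Finset.mem_univ i)

lemma lpN_anti {ι : Type*} [Fintype ι] {p q : ℝ≥0∞} (hp : 1 ≤ p) (hpq : p ≤ q) (v : ι → ℝ) :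
    lpNorm q v ≤ lpNorm p v := by
  by_cases h : q = ∞
  · subst h
    rw [lpN_top]
    exact Real.iSup_le (fun i => abs_le_lpN hp v i) (lpN_nonneg _ _)
  · have hq := hp.trans hpq
    have hp' : p ≠ ∞ := ne_top_of_le_ne_top h hpq
    have h0 := toReal_pos_aux hq h
    have h1 := toReal_pos_aux hp hp'
    have h2 : p.toReal ≤ q.toReal := ENNReal.toReal_mono h hpq
    rw [← Real.rpow_le_rpow_iff (lpN_nonneg _ _) (lpN_nonneg _ _) h0, lpN_pow hq h]
    have e : q.toReal = p.toReal + (q.toReal - p.toReal) := by ring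
    have key : ∀ x : ℝ, 0 ≤ x → x ^ q.toReal = x ^ p.toReal * x ^ (q.toReal - p.toReal) := by
      intro x hx
      rw [← Real.rpow_add_of_nonneg hx h1.le (by linarith), ← e]
    rw [key _ (lpN_nonneg _ _), lpN_pow hp hp', Finset.sum_mul]
    refine Finset.sum_le_sum fun i _ => ?_
    rw [key _ (abs_nonneg _)]
    exact mul_le_mul_of_nonneg_left
      (Real.rpow_le_rpow (abs_nonneg _) (abs_le_lpN hp v i) (by linarith)) (by positivity)

lemma conj_cases {p q : ℝ≥0∞} (hp : 1 ≤ p) (hq : 1 ≤ q) (h : 1 / p + 1 / q = 1) :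
    (p = 1 ∧ q = ∞) ∨ (p = ∞ ∧ q = 1) ∨
      (p ≠ ∞ ∧ q ≠ ∞ ∧ q.toReal.HolderConjugate p.toReal) := by
  by_cases hpt : p = ∞
  · subst hpt
    right; left
    simpa using h
  by_cases hqt : q = ∞
  · subst hqt
    left
    simpa using h
  right; right
  refine ⟨hpt, hqt, ?_⟩
  have h1 := toReal_pos_aux hp hpt
  have h2 := toReal_pos_aux hq hqt
  have h3 : (1 / p + 1 / q).toReal = 1 := by rw [h]; simp
  rw [ENNReal.toReal_add] at h3
  · simp at h3
    have : 0 < (p.toReal)⁻¹ := by positivity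
    rw [Real.holderConjugate_iff]
    refine ⟨?_, by linarith⟩
    exact (inv_lt_one₀ h2).1 (by linarith)
  · simp; rintro rfl; simp at hp
  · simp; rintro rfl; simp at hq

lemma lpN_holder {ι : Type*} [Fintype ι] {p q : ℝ≥0∞} (hp : 1 ≤ p) (hq : 1 ≤ q)
    (h : 1 / p + 1 / q = 1) (a b : ι → ℝ) :
    ∑ i, a i * b i ≤ lpNorm q a * lpNorm p b := by
  rcases conj_cases hp hq h with ⟨rfl, rfl⟩ | ⟨rfl, rfl⟩ | ⟨h1, h2, h3⟩
  · rw [lpN_one, Finset.mul_sum]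
    refine Finset.sum_le_sum fun i _ => (le_abs_self _).trans ?_
    rw [abs_mul]
    exact mul_le_mul_of_nonneg_right (abs_le_lpN hq a i) (abs_nonneg _)
  · rw [lpN_one, Finset.sum_mul]
    refine Finset.sum_le_sum fun i _ => (le_abs_self _).trans ?_
    rw [abs_mul]
    exact mul_le_mul_of_nonneg_left (abs_le_lpN hp b i) (abs_nonneg _)
  · rw [lpNorm, lpNorm, if_neg h1, if_neg h2]
    exact Real.inner_le_Lp_mul_Lq _ _ _ h3

lemma lpN_single {ι : Type*} [Fintype ι] [DecidableEq ι] {p : ℝ≥0∞} (hp : 1 ≤ p) (i : ι) (x : ℝ) :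
    lpNorm p (Pi.single i x) = |x| := by
  apply le_antisymm
  · refine (lpN_anti le_rfl hp _).trans ?_
    rw [lpN_one, Finset.sum_eq_single i]
    · simp
    · intro j _ hj
      simp [hj]
    · simp
  · simpa using abs_le_lpN hp (Pi.single i x : ι → ℝ) i

lemma lpN_attain {ι : Type*} [Fintype ι] [Nonempty ι] {p q : ℝ≥0∞} (hp : 1 ≤ p) (hq : 1 ≤ q)
    (h : 1 / p + 1 / q = 1) (a : ι → ℝ) (ha : ∀ i, 0 ≤ a i) :
    ∃ b : ι → ℝ, (∀ i, 0 ≤ b i) ∧ lpNorm p b ≤ 1 ∧ lpNorm q a = ∑ i, a i * b i := by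
  classical
  rcases conj_cases hp hq h with ⟨rfl, rfl⟩ | ⟨rfl, rfl⟩ | ⟨h1, h2, h3⟩
  · obtain ⟨i, hi⟩ := Finite.exists_max a
    refine ⟨Pi.single i 1, fun j => ?_, ?_, ?_⟩
    · by_cases hj : j = i
      · subst hj; simp
      · simp [hj]
    · rw [lpN_single le_rfl]; simp
    · rw [Finset.sum_eq_single i]
      · apply le_antisymm
        · rw [lpN_top]
          refine ciSup_le fun j => ?_
          rw [abs_of_nonneg (ha j)]
          simpa using hi j
        · simpa [abs_of_nonneg (ha i)] using abs_le_lpN hq a i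
      · intro j _ hj
        simp [hj]
      · simp
  · refine ⟨fun _ => 1, fun _ => zero_le_one, ?_, ?_⟩
    · rw [lpN_top]; simp
    · rw [lpN_one]
      simp [abs_of_nonneg (ha _)]
  · lift a to ι → NNReal using ha
    obtain ⟨⟨b, hb, hb'⟩, -⟩ := NNReal.isGreatest_Lp Finset.univ a h3
    refine ⟨fun i => b i, fun i => (b i).2, ?_, ?_⟩
    · rw [lpNorm, if_neg h1]
      refine Real.rpow_le_one (by positivity) ?_ (by positivity)
      simp only [Set.mem_setOf_eq] at hb
      have : ((∑ i, b i ^ p.toReal : NNReal) : ℝ) ≤ 1 := by exact_mod_cast hb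
      simpa using this
    · rw [lpNorm, if_neg h2]
      have := congrArg NNReal.toReal hb'
      push_cast at this
      simpa using this.symm

/-- Lemma "lemma_variance_U": if `p₂ ≤ q₂` and `p₁'` is the Hölder conjugate of `p₁`, then
`sup { Σ_i ‖X(:,i)‖_{q₁}·‖U(i,:)‖_{q₂} : ‖U‖_{p₁×p₂} ≤ 1 } = ‖Xᵀ‖_{p₁'×q₁}`,
the supremum being attained. -/
theorem sup_weighted_row_norms_eq_mixedNorm_transpose
    (n d k : ℕ) (hn : 0 < n) (hd : 0 < d) (hk : 0 < k)
    (X : Matrix (Fin n) (Fin d) ℝ)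
    (p₁ p₂ q₁ q₂ p₁' : ℝ≥0∞)
    (hp₁ : 1 ≤ p₁) (hp₂ : 1 ≤ p₂) (hq₁ : 1 ≤ q₁) (hq₂ : 1 ≤ q₂) (hp₁' : 1 ≤ p₁')
    (hconj : 1 / p₁ + 1 / p₁' = 1) (hle : p₂ ≤ q₂) :
    IsGreatest
      {r : ℝ | ∃ U : Matrix (Fin d) (Fin k) ℝ, mixedNorm p₁ p₂ U ≤ 1 ∧
        r = ∑ i : Fin d, lpNorm q₁ (fun l => X l i) * lpNorm q₂ (U i)}
      (mixedNorm p₁' q₁ Xᵀ) ∧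
    mixedNorm p₁' q₁ Xᵀ = lpNorm p₁' (fun i : Fin d => lpNorm q₁ (fun l => X l i)) := by
  refine ⟨⟨?_, ?_⟩, rfl⟩
  · haveI : Nonempty (Fin d) := ⟨⟨0, hd⟩⟩
    obtain ⟨b, hb0, hb1, hb2⟩ := lpN_attain hp₁ hp₁' hconj
      (fun i : Fin d => lpNorm q₁ (fun l => X l i)) (fun i => lpN_nonneg _ _)
    refine ⟨fun i => Pi.single (⟨0, hk⟩ : Fin k) (b i), ?_, ?_⟩
    · unfold mixedNorm
      simp only [lpN_single hp₂, abs_of_nonneg (hb0 _)]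
      exact hb1
    · simp only [lpN_single hq₂, abs_of_nonneg (hb0 _)]
      exact hb2
  · rintro r ⟨U, hU, rfl⟩
    calc ∑ i : Fin d, lpNorm q₁ (fun l => X l i) * lpNorm q₂ (U i)
        ≤ ∑ i : Fin d, lpNorm q₁ (fun l => X l i) * lpNorm p₂ (U i) :=
          Finset.sum_le_sum fun i _ =>
            mul_le_mul_of_nonneg_left (lpN_anti hp₂ hle _) (lpN_nonneg _ _)
      _ ≤ lpNorm p₁' (fun i => lpNorm q₁ (fun l => X l i)) * mixedNorm p₁ p₂ U :=
          lpN_holder hp₁ hp₁' hconj _ _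
      _ ≤ mixedNorm p₁' q₁ Xᵀ :=
          mul_le_of_le_one_right (lpN_nonneg _ _) hU
end

section
/- Let n, m, k be positive integers, X̂ ∈ ℝ^{n×m}, and let p_U¹, p_U², p_V¹, p_V² ∈ [1,∞] with Hölder conjugates q_U¹, q_U², q_V¹, q_V². Define L = (1/n) sup{ ‖X̂U‖_{q_V¹×q_V²} : U ∈ ℝ^{m×k}, ‖U‖_{p_U¹×p_U²} ≤ 1 }. (i) For any V, Y ∈ (Δ_k)^{⊗n} with d_j := ‖X̂(j,:)‖_{q_U¹}·‖V(j,:) − Y(j,:)‖_{q_U²} > 0 for all j, the distribution q*_j = d_j/Σ_ȷ d_ȷ minimizes E[ ‖η_{V,Y}(q)‖_{q_U¹×q_U²}² ] = Σ_j (1/q_j) d_j² over probability vectors q with positive entries, with minimal value (Σ_j d_j)². (ii) If moreover p_V¹ ≥ 2, then (1/n²) sup{ E[ ‖X̂ᵀ(V−Y) − η_{V,Y}(q*(V,Y))‖_{q_U¹×q_U²}² ] : V, Y ∈ (Δ_k)^{⊗n}, all d_j(V,Y) > 0 } ≤ 8 n L² + (8/n²) ‖X̂‖_{1×q_U¹}².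 -/
open scoped ENNReal BigOperators
open Matrix

/-- The partial-sampling dual estimate `η_{V,Y}(q) = X̂ᵀ (e_j e_jᵀ / q_j)(V − Y)`
as a function of the drawn index `j`. -/
noncomputable def etaPart {n m k : ℕ} (Xh : Matrix (Fin n) (Fin m) ℝ)
    (V Y : Matrix (Fin n) (Fin k) ℝ) (q : Fin n → ℝ) (j : Fin n) :
    Matrix (Fin m) (Fin k) ℝ :=
  Matrix.of fun r c => Xh j r * (V j c - Y j c) / q j

lemma ps_cases {p q : ℝ≥0∞} (h : 1 / p + 1 / q = 1) :
    (p = 1 ∧ q = ∞) ∨ (p = ∞ ∧ q = 1) ∨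
      (p ≠ ∞ ∧ q ≠ ∞ ∧ p.toReal.HolderConjugate q.toReal) := by
  by_cases hp : p = ∞
  · subst hp
    right; left
    simpa using h
  by_cases hq : q = ∞
  · subst hq
    left
    simpa using h
  right; right
  refine ⟨hp, hq, ?_⟩
  have : ENNReal.HolderConjugate p q := ⟨by simpa using h⟩
  exact ENNReal.HolderConjugate.toReal_of_ne_top hp hq

lemma ps_one_le {p q : ℝ≥0∞} (h : 1 / p + 1 / q = 1) : 1 ≤ q := by
  rcases ps_cases h with ⟨_, rfl⟩ | ⟨_, rfl⟩ | ⟨_, hq, hc⟩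
  · simp
  · simp
  · have := hc.symm.lt
    rw [← ENNReal.ofReal_toReal hq]
    simpa using this.le

section
variable {ι κ : Type*} [Fintype ι] [Fintype κ]

lemma ps_nonneg (p : ℝ≥0∞) (v : ι → ℝ) : 0 ≤ lpNorm p v := by
  unfold lpNorm
  split_ifs
  · exact Real.iSup_nonneg fun i => abs_nonneg _
  · positivity

lemma ps_pos {p : ℝ≥0∞} (hp : 1 ≤ p) (h : p ≠ ∞) : 1 ≤ p.toReal := by
  simpa using (ENNReal.toReal_le_toReal (by simp) h).2 hp

lemma ps_mono [Nonempty ι] {p : ℝ≥0∞} (hp : 1 ≤ p) {u v : ι → ℝ} (h : ∀ i, |u i| ≤ |v i|) :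
    lpNorm p u ≤ lpNorm p v := by
  unfold lpNorm
  split_ifs with ht
  · exact ciSup_mono (Finite.bddAbove_range _) h
  · have := ps_pos hp ht
    refine Real.rpow_le_rpow (by positivity) (Finset.sum_le_sum fun i _ => ?_) (by positivity)
    exact Real.rpow_le_rpow (abs_nonneg _) (h i) (by positivity)

lemma ps_smul {p : ℝ≥0∞} (hp : 1 ≤ p) (c : ℝ) (v : ι → ℝ) :
    lpNorm p (fun i => c * v i) = |c| * lpNorm p v := by
  unfold lpNorm
  split_ifs with ht
  · rw [Real.mul_iSup_of_nonneg (abs_nonneg _)]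
    simp [abs_mul]
  · have h1 := ps_pos hp ht
    have h0 : p.toReal ≠ 0 := by positivity
    simp_rw [abs_mul, Real.mul_rpow (abs_nonneg _) (abs_nonneg _), ← Finset.mul_sum]
    rw [Real.mul_rpow (by positivity) (by positivity), ← Real.rpow_mul (abs_nonneg _),
      mul_one_div_cancel h0, Real.rpow_one]

lemma ps_entry {p : ℝ≥0∞} (hp : 1 ≤ p) (v : ι → ℝ) (i : ι) : |v i| ≤ lpNorm p v := by
  unfold lpNorm
  split_ifs with ht
  · exact le_ciSup (f := fun i => |v i|) (Finite.bddAbove_range _) i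
  · have h1 := ps_pos hp ht
    have h0 : p.toReal ≠ 0 := by positivity
    calc |v i| = (|v i| ^ p.toReal) ^ (1 / p.toReal) := by
          rw [← Real.rpow_mul (abs_nonneg _), mul_one_div_cancel h0, Real.rpow_one]
      _ ≤ _ := by
          apply Real.rpow_le_rpow (by positivity) _ (by positivity)
          exact Finset.single_le_sum (f := fun i => |v i| ^ p.toReal)
            (fun i _ => by positivity) (Finset.mem_univ i)

lemma ps_lp1 (v : ι → ℝ) : lpNorm 1 v = ∑ i, |v i| := by
  simp [lpNorm]

lemma ps_holder1 (u v : ι → ℝ) : ∑ i, u i * v i ≤ lpNorm 1 u * lpNorm ∞ v := by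
  rw [ps_lp1, Finset.sum_mul]
  apply Finset.sum_le_sum
  intro i _
  calc u i * v i ≤ |u i| * |v i| := by rw [← abs_mul]; exact le_abs_self _
    _ ≤ _ := by gcongr; exact ps_entry (by simp) v i

lemma ps_holder {p q : ℝ≥0∞} (h : 1 / p + 1 / q = 1) (u v : ι → ℝ) :
    ∑ i, u i * v i ≤ lpNorm p u * lpNorm q v := by
  rcases ps_cases h with ⟨rfl, rfl⟩ | ⟨rfl, rfl⟩ | ⟨hp, hq, hc⟩
  · exact ps_holder1 u v
  · rw [mul_comm]
    simp_rw [mul_comm (u _)]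
    exact ps_holder1 v u
  · simp only [lpNorm, hp, hq, if_false]
    exact Real.inner_le_Lp_mul_Lq _ _ _ hc

lemma ps_dual [Nonempty ι] {p q : ℝ≥0∞} (h : 1 / p + 1 / q = 1) (v : ι → ℝ) :
    ∃ u : ι → ℝ, lpNorm p u ≤ 1 ∧ ∑ i, u i * v i = lpNorm q v := by
  classical
  have hs : ∀ x : ℝ, (SignType.sign x : ℝ) * x = |x| := fun x => sign_mul_self x
  have hs1 : ∀ x : ℝ, |(SignType.sign x : ℝ)| ≤ 1 := by
    intro x
    rcases lt_trichotomy x 0 with hx | hx | hx <;> simp [hx]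
  rcases ps_cases h with ⟨rfl, rfl⟩ | ⟨rfl, rfl⟩ | ⟨hp, hq, hc⟩
  · obtain ⟨i, hi⟩ := exists_eq_ciSup_of_finite (f := fun i => |v i|)
    refine ⟨fun j => if j = i then (SignType.sign (v i) : ℝ) else 0, ?_, ?_⟩
    · rw [ps_lp1, Finset.sum_eq_single i]
      · simpa using hs1 (v i)
      · intro b _ hb; simp [hb]
      · simp
    · simp only [lpNorm, if_true, ← hi, ite_mul, zero_mul, Finset.sum_ite_eq', Finset.mem_univ]
      exact hs _
  · refine ⟨fun j => (SignType.sign (v j) : ℝ), ?_, ?_⟩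
    · simp only [lpNorm, if_true]
      exact ciSup_le fun i => hs1 _
    · rw [ps_lp1]
      exact Finset.sum_congr rfl fun i _ => hs _
  · obtain ⟨⟨g, hg, hg'⟩, -⟩ := NNReal.isGreatest_Lp Finset.univ (fun i => Real.nnabs (v i)) hc.symm
    refine ⟨fun i => (SignType.sign (v i) : ℝ) * g i, ?_, ?_⟩
    · simp only [lpNorm, hp, if_false]
      apply Real.rpow_le_one (by positivity) _ (by positivity)
      have hg2 : ∑ i, (g i : ℝ) ^ p.toReal ≤ 1 := by exact_mod_cast hg
      refine le_trans (Finset.sum_le_sum fun i _ => ?_) hg2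
      apply Real.rpow_le_rpow (by positivity) _ ENNReal.toReal_nonneg
      rw [abs_mul, abs_of_nonneg (NNReal.coe_nonneg (g i))]
      calc _ ≤ 1 * (g i : ℝ) := by
            gcongr
            exact hs1 _
        _ = _ := one_mul _
    · simp only [lpNorm, hq, if_false]
      have := congrArg (fun x : NNReal => (x : ℝ)) hg'
      simp only [NNReal.coe_sum, NNReal.coe_mul, NNReal.coe_rpow, Real.coe_nnabs] at this
      rw [← this]
      refine Finset.sum_congr rfl fun i _ => ?_
      rw [← hs]; ring

lemma ps_le_one [Nonempty ι] {p q : ℝ≥0∞} (hp : 1 ≤ p) (h : 1 / p + 1 / q = 1) (v : ι → ℝ) :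
    lpNorm q v ≤ ∑ i, |v i| := by
  obtain ⟨u, hu, hv⟩ := ps_dual h v
  rw [← hv]
  refine Finset.sum_le_sum fun i _ => ?_
  calc u i * v i ≤ |u i| * |v i| := by rw [← abs_mul]; exact le_abs_self _
    _ ≤ 1 * |v i| := by gcongr; exact (ps_entry hp u i).trans hu
    _ = _ := one_mul _

lemma ps_const [Nonempty ι] {p : ℝ≥0∞} (hp : 2 ≤ p) (v : ι → ℝ) (hv : ∀ i, |v i| ≤ 2) :
    lpNorm p v ≤ Real.sqrt (Fintype.card ι) * 2 := by
  have hc : (1 : ℝ) ≤ Fintype.card ι := by exact_mod_cast Fintype.card_pos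
  unfold lpNorm
  split_ifs with ht
  · refine (ciSup_le hv).trans ?_
    have := Real.one_le_sqrt.2 hc
    linarith
  · have h2 : 2 ≤ p.toReal := by
      simpa using (ENNReal.toReal_le_toReal (by simp) ht).2 hp
    have h0 : p.toReal ≠ 0 := by positivity
    calc (∑ i, |v i| ^ p.toReal) ^ (1 / p.toReal)
        ≤ (∑ i : ι, (2 : ℝ) ^ p.toReal) ^ (1 / p.toReal) := by
          gcongr
          exact hv _
      _ = (Fintype.card ι : ℝ) ^ (1 / p.toReal) * 2 := by
          rw [Finset.sum_const, nsmul_eq_mul, Finset.card_univ,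
            Real.mul_rpow (by positivity) (by positivity), ← Real.rpow_mul (by norm_num),
            mul_one_div_cancel h0, Real.rpow_one]
      _ ≤ _ := by
          rw [Real.sqrt_eq_rpow]
          gcongr

lemma ps_mnonneg (p q : ℝ≥0∞) (A : Matrix ι κ ℝ) : 0 ≤ mixedNorm p q A := ps_nonneg _ _

lemma ps_mmono [Nonempty ι] [Nonempty κ] {p q : ℝ≥0∞} (hp : 1 ≤ p) (hq : 1 ≤ q)
    {A B : Matrix ι κ ℝ} (h : ∀ i j, |A i j| ≤ |B i j|) : mixedNorm p q A ≤ mixedNorm p q B := by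
  apply ps_mono hp
  intro i
  rw [abs_of_nonneg (ps_nonneg _ _), abs_of_nonneg (ps_nonneg _ _)]
  exact ps_mono hq (h i)

lemma ps_mentry {p q : ℝ≥0∞} (hp : 1 ≤ p) (hq : 1 ≤ q) (A : Matrix ι κ ℝ) (i : ι) (j : κ) :
    |A i j| ≤ mixedNorm p q A :=
  (ps_entry hq (A i) j).trans ((le_abs_self _).trans (ps_entry hp (fun i => lpNorm q (A i)) i))

lemma ps_mholder {p q p' q' : ℝ≥0∞} (h : 1 / p + 1 / q = 1) (h' : 1 / p' + 1 / q' = 1)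
    (A B : Matrix ι κ ℝ) :
    ∑ i, ∑ j, A i j * B i j ≤ mixedNorm p p' A * mixedNorm q q' B :=
  (Finset.sum_le_sum fun i _ => ps_holder h' (A i) (B i)).trans (ps_holder h _ _)

lemma ps_mdual [Nonempty ι] [Nonempty κ] {p q p' q' : ℝ≥0∞} (hp : 1 ≤ p) (hp' : 1 ≤ p')
    (h : 1 / p + 1 / q = 1) (h' : 1 / p' + 1 / q' = 1) (A : Matrix ι κ ℝ) :
    ∃ U : Matrix ι κ ℝ, mixedNorm p p' U ≤ 1 ∧ ∑ i, ∑ j, U i j * A i j = mixedNorm q q' A := by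
  choose u hu hA using fun i => ps_dual h' (A i)
  obtain ⟨w, hw, hW⟩ := ps_dual h (fun i => lpNorm q' (A i))
  refine ⟨Matrix.of fun i j => w i * u i j, ?_, ?_⟩
  · refine le_trans (ps_mono hp fun i => ?_) hw
    rw [abs_of_nonneg (ps_nonneg _ _)]
    have := ps_smul hp' (w i) (u i)
    change lpNorm p' (fun j => w i * u i j) ≤ _
    rw [this]
    exact mul_le_of_le_one_right (abs_nonneg _) (hu i)
  · unfold mixedNorm
    rw [← hW]
    refine Finset.sum_congr rfl fun i _ => ?_
    rw [← hA, Finset.mul_sum]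
    exact Finset.sum_congr rfl fun j _ => by simp [mul_assoc]

lemma ps_msub [Nonempty ι] [Nonempty κ] {p q p' q' : ℝ≥0∞} (hp : 1 ≤ p) (hp' : 1 ≤ p')
    (h : 1 / p + 1 / q = 1) (h' : 1 / p' + 1 / q' = 1) (A B : Matrix ι κ ℝ) :
    mixedNorm q q' (A - B) ≤ mixedNorm q q' A + mixedNorm q q' B := by
  obtain ⟨U, hU, hE⟩ := ps_mdual hp hp' h h' (A - B)
  have hA := ps_mholder h h' U A
  have hB := ps_mholder h h' (-U) B
  have hn : mixedNorm p p' (-U) ≤ mixedNorm p p' U :=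
    ps_mmono hp hp' fun i j => by simp
  have e : ∑ i, ∑ j, U i j * (A - B) i j
      = ∑ i, ∑ j, U i j * A i j + ∑ i, ∑ j, (-U) i j * B i j := by
    simp only [← Finset.sum_add_distrib]
    refine Finset.sum_congr rfl fun i _ => Finset.sum_congr rfl fun j _ => ?_
    simp only [Matrix.sub_apply, Matrix.neg_apply]; ring
  have a0 := ps_mnonneg q q' A
  have b0 := ps_mnonneg q q' B
  rw [← hE, e]
  nlinarith

end

lemma ps_eta {n m k : ℕ} {q₁ q₂ : ℝ≥0∞} (h₁ : 1 ≤ q₁) (h₂ : 1 ≤ q₂)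
    (Xh : Matrix (Fin n) (Fin m) ℝ) (V Y : Matrix (Fin n) (Fin k) ℝ) (q : Fin n → ℝ) (j : Fin n)
    (hq : 0 < q j) :
    mixedNorm q₁ q₂ (etaPart Xh V Y q j)
      = lpNorm q₁ (Xh j) * lpNorm q₂ (fun l => V j l - Y j l) / q j := by
  set N := lpNorm q₂ (fun l => V j l - Y j l) with hN
  have hN0 : 0 ≤ N := ps_nonneg _ _
  have e1 : ∀ r, lpNorm q₂ (etaPart Xh V Y q j r) = (N / q j) * |Xh j r| := by
    intro r
    have : etaPart Xh V Y q j r = fun c => (Xh j r / q j) * (V j c - Y j c) := by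
      funext c; simp only [etaPart, Matrix.of_apply]; ring
    rw [this, ps_smul h₂ _ (fun l => V j l - Y j l), abs_div, abs_of_pos hq, ← hN]; ring
  have e2 : lpNorm q₁ (fun r => |Xh j r|) = lpNorm q₁ (Xh j) := by simp [lpNorm]
  unfold mixedNorm
  simp_rw [e1]
  rw [ps_smul h₁ _ (fun r => |Xh j r|), e2, abs_of_nonneg (by positivity)]
  ring

lemma ps_diff {n k : ℕ} (hk : 0 < k) {p q : ℝ≥0∞} (hp : 1 ≤ p) (h : 1 / p + 1 / q = 1)
    (V Y : Matrix (Fin n) (Fin k) ℝ) (j : Fin n)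
    (hV : V j ∈ stdSimplex ℝ (Fin k)) (hY : Y j ∈ stdSimplex ℝ (Fin k)) :
    lpNorm q (fun l => V j l - Y j l) ≤ 2 := by
  have : Nonempty (Fin k) := ⟨⟨0, hk⟩⟩
  refine (ps_le_one hp h _).trans ?_
  calc ∑ l, |V j l - Y j l| ≤ ∑ l, (V j l + Y j l) := by
        refine Finset.sum_le_sum fun l _ => ?_
        have := hV.1 l
        have := hY.1 l
        rw [abs_le]; constructor <;> linarith
    _ = 2 := by rw [Finset.sum_add_distrib, hV.2, hY.2]; norm_num

lemma ps_op {n m k : ℕ} (hn : 0 < n) (hm : 0 < m) (hk : 0 < k)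
    (Xh : Matrix (Fin n) (Fin m) ℝ)
    (pU₁ pU₂ pV₁ pV₂ qU₁ qU₂ qV₁ qV₂ : ℝ≥0∞)
    (hpU₁ : 1 ≤ pU₁) (hpU₂ : 1 ≤ pU₂)
    (hcU₁ : 1 / pU₁ + 1 / qU₁ = 1) (hcU₂ : 1 / pU₂ + 1 / qU₂ = 1)
    (hcV₁ : 1 / pV₁ + 1 / qV₁ = 1) (hcV₂ : 1 / pV₂ + 1 / qV₂ = 1)
    (D : Matrix (Fin n) (Fin k) ℝ) :
    mixedNorm qU₁ qU₂ (Xhᵀ * D) ≤ mixedNorm pV₁ pV₂ D *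
      sSup {r : ℝ | ∃ U : Matrix (Fin m) (Fin k) ℝ,
        mixedNorm pU₁ pU₂ U ≤ 1 ∧ r = mixedNorm qV₁ qV₂ (Xh * U)} := by
  have : Nonempty (Fin k) := ⟨⟨0, hk⟩⟩
  have : Nonempty (Fin n) := ⟨⟨0, hn⟩⟩
  have : Nonempty (Fin m) := ⟨⟨0, hm⟩⟩
  obtain ⟨U, hU, hE⟩ := ps_mdual hpU₁ hpU₂ hcU₁ hcU₂ (Xhᵀ * D)
  have e : ∑ i, ∑ j, U i j * (Xhᵀ * D) i j = ∑ i, ∑ j, D i j * (Xh * U) i j := by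
    simp only [Matrix.mul_apply, Matrix.transpose_apply, Finset.mul_sum]
    rw [Finset.sum_comm]
    rw [Finset.sum_comm (s := (Finset.univ : Finset (Fin n))) (t := (Finset.univ : Finset (Fin k)))]
    refine Finset.sum_congr rfl fun j _ => ?_
    rw [Finset.sum_comm]
    refine Finset.sum_congr rfl fun i _ => Finset.sum_congr rfl fun r _ => ?_
    ring
  rw [← hE, e]
  refine (ps_mholder hcV₁ hcV₂ D (Xh * U)).trans ?_
  apply mul_le_mul_of_nonneg_left _ (ps_mnonneg _ _ _)
  refine le_csSup ?_ ⟨U, hU, rfl⟩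
  refine ⟨mixedNorm qV₁ qV₂ (Matrix.of fun (i : Fin n) (_ : Fin k) => ∑ r, |Xh i r|), ?_⟩
  rintro _ ⟨W, hW, rfl⟩
  apply ps_mmono (ps_one_le hcV₁) (ps_one_le hcV₂)
  intro i j
  simp only [Matrix.of_apply]
  rw [abs_of_nonneg (Finset.sum_nonneg fun r _ => abs_nonneg (Xh i r)), Matrix.mul_apply]
  refine (Finset.abs_sum_le_sum_abs _ _).trans (Finset.sum_le_sum fun r _ => ?_)
  rw [abs_mul]
  exact mul_le_of_le_one_right (abs_nonneg _) ((ps_mentry hpU₁ hpU₂ W r j).trans hW)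

/-- Extended Proposition "th:variance-partial-general", dual part: for general
mixed norms, the optimal sampling distribution and the variance proxy bound
(assuming `p_V¹ ≥ 2`). -/
theorem partial_sampling_dual_general_norms
    (n m k : ℕ) (hn : 0 < n) (hm : 0 < m) (hk : 0 < k)
    (Xh : Matrix (Fin n) (Fin m) ℝ)
    (pU₁ pU₂ pV₁ pV₂ qU₁ qU₂ qV₁ qV₂ : ℝ≥0∞)
    (hpU₁ : 1 ≤ pU₁) (hpU₂ : 1 ≤ pU₂) (hpV₁ : 1 ≤ pV₁) (hpV₂ : 1 ≤ pV₂)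
    (hcU₁ : 1 / pU₁ + 1 / qU₁ = 1) (hcU₂ : 1 / pU₂ + 1 / qU₂ = 1)
    (hcV₁ : 1 / pV₁ + 1 / qV₁ = 1) (hcV₂ : 1 / pV₂ + 1 / qV₂ = 1)
    (L : ℝ)
    (hL : L = sSup {r : ℝ | ∃ U : Matrix (Fin m) (Fin k) ℝ,
        mixedNorm pU₁ pU₂ U ≤ 1 ∧ r = mixedNorm qV₁ qV₂ (Xh * U)} / n) :
    -- (i) optimal distribution and second moment
    (∀ V Y : Matrix (Fin n) (Fin k) ℝ,
      (∀ j, V j ∈ stdSimplex ℝ (Fin k)) → (∀ j, Y j ∈ stdSimplex ℝ (Fin k)) →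
      (∀ j, 0 < lpNorm qU₁ (Xh j) * lpNorm qU₂ (fun l => V j l - Y j l)) →
      (∀ q : Fin n → ℝ, (∀ j, 0 < q j) → (∑ j, q j) = 1 →
        ((∑ j, q j * (mixedNorm qU₁ qU₂ (etaPart Xh V Y q j)) ^ 2)
            = ∑ j, (1 / q j) * (lpNorm qU₁ (Xh j) * lpNorm qU₂ (fun l => V j l - Y j l)) ^ 2) ∧
        (∑ j, lpNorm qU₁ (Xh j) * lpNorm qU₂ (fun l => V j l - Y j l)) ^ 2
          ≤ ∑ j, q j * (mixedNorm qU₁ qU₂ (etaPart Xh V Y q j)) ^ 2) ∧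
      (∑ j, (lpNorm qU₁ (Xh j) * lpNorm qU₂ (fun l => V j l - Y j l) /
              ∑ j', lpNorm qU₁ (Xh j') * lpNorm qU₂ (fun l => V j' l - Y j' l)) *
          (mixedNorm qU₁ qU₂ (etaPart Xh V Y
            (fun j' => lpNorm qU₁ (Xh j') * lpNorm qU₂ (fun l => V j' l - Y j' l) /
              ∑ j'', lpNorm qU₁ (Xh j'') * lpNorm qU₂ (fun l => V j'' l - Y j'' l)) j)) ^ 2)
        = (∑ j, lpNorm qU₁ (Xh j) * lpNorm qU₂ (fun l => V j l - Y j l)) ^ 2) ∧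
    -- (ii) variance proxy bound under `p_V¹ ≥ 2`
    ((2 : ℝ≥0∞) ≤ pV₁ →
      ∀ V Y : Matrix (Fin n) (Fin k) ℝ,
      (∀ j, V j ∈ stdSimplex ℝ (Fin k)) → (∀ j, Y j ∈ stdSimplex ℝ (Fin k)) →
      (∀ j, 0 < lpNorm qU₁ (Xh j) * lpNorm qU₂ (fun l => V j l - Y j l)) →
      (1 / (n : ℝ) ^ 2) *
        (∑ j, (lpNorm qU₁ (Xh j) * lpNorm qU₂ (fun l => V j l - Y j l) /
                ∑ j', lpNorm qU₁ (Xh j') * lpNorm qU₂ (fun l => V j' l - Y j' l)) *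
          (mixedNorm qU₁ qU₂ (Xhᵀ * (V - Y) - etaPart Xh V Y
            (fun j' => lpNorm qU₁ (Xh j') * lpNorm qU₂ (fun l => V j' l - Y j' l) /
              ∑ j'', lpNorm qU₁ (Xh j'') * lpNorm qU₂ (fun l => V j'' l - Y j'' l)) j)) ^ 2)
        ≤ 8 * n * L ^ 2 + (8 / (n : ℝ) ^ 2) * (mixedNorm 1 qU₁ Xh) ^ 2) := by
  have : Nonempty (Fin k) := ⟨⟨0, hk⟩⟩
  have : Nonempty (Fin n) := ⟨⟨0, hn⟩⟩
  have : Nonempty (Fin m) := ⟨⟨0, hm⟩⟩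
  have h₁ := ps_one_le hcU₁
  have h₂ := ps_one_le hcU₂
  have key : ∀ V Y : Matrix (Fin n) (Fin k) ℝ, ∀ q : Fin n → ℝ, (∀ j, 0 < q j) →
      (∑ j, q j * (mixedNorm qU₁ qU₂ (etaPart Xh V Y q j)) ^ 2)
            = ∑ j, (1 / q j) * (lpNorm qU₁ (Xh j) * lpNorm qU₂ (fun l => V j l - Y j l)) ^ 2 := by
    intro V Y q hq
    refine Finset.sum_congr rfl fun j _ => ?_
    rw [ps_eta h₁ h₂ Xh V Y q j (hq j)]
    have := (hq j).ne'
    field_simp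
  have opt : ∀ V Y : Matrix (Fin n) (Fin k) ℝ,
      (∀ j, 0 < lpNorm qU₁ (Xh j) * lpNorm qU₂ (fun l => V j l - Y j l)) →
      (∑ j, (lpNorm qU₁ (Xh j) * lpNorm qU₂ (fun l => V j l - Y j l) /
              ∑ j', lpNorm qU₁ (Xh j') * lpNorm qU₂ (fun l => V j' l - Y j' l)) *
          (mixedNorm qU₁ qU₂ (etaPart Xh V Y
            (fun j' => lpNorm qU₁ (Xh j') * lpNorm qU₂ (fun l => V j' l - Y j' l) /
              ∑ j'', lpNorm qU₁ (Xh j'') * lpNorm qU₂ (fun l => V j'' l - Y j'' l)) j)) ^ 2)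
        = (∑ j, lpNorm qU₁ (Xh j) * lpNorm qU₂ (fun l => V j l - Y j l)) ^ 2 := by
    intro V Y hd
    have hS : 0 < ∑ j, lpNorm qU₁ (Xh j) * lpNorm qU₂ (fun l => V j l - Y j l) :=
      Finset.sum_pos (fun j _ => hd j) Finset.univ_nonempty
    have := key V Y (fun j' => lpNorm qU₁ (Xh j') * lpNorm qU₂ (fun l => V j' l - Y j' l) /
              ∑ j'', lpNorm qU₁ (Xh j'') * lpNorm qU₂ (fun l => V j'' l - Y j'' l))
              (fun j => div_pos (hd j) hS)
    rw [this]
    clear this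
    rw [sq, Finset.sum_mul]
    refine Finset.sum_congr rfl fun j _ => ?_
    have hj := (hd j).ne'
    have hS' := hS.ne'
    generalize lpNorm qU₁ (Xh j) * lpNorm qU₂ (fun l => V j l - Y j l) = x at *
    field_simp
  refine ⟨fun V Y hV hY hd => ⟨fun q hq hq1 => ⟨key V Y q hq, ?_⟩, opt V Y hd⟩, ?_⟩
  · rw [key V Y q hq]
    have := Finset.sq_sum_div_le_sum_sq_div Finset.univ
      (fun j => lpNorm qU₁ (Xh j) * lpNorm qU₂ (fun l => V j l - Y j l)) (fun j _ => hq j)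
    rw [hq1, div_one] at this
    refine this.trans (le_of_eq (Finset.sum_congr rfl fun j _ => ?_))
    ring
  · intro hp2 V Y hV hY hd
    have hO := opt V Y hd
    set S := ∑ j, lpNorm qU₁ (Xh j) * lpNorm qU₂ (fun l => V j l - Y j l) with hSdef
    have hS : 0 < S := Finset.sum_pos (fun j _ => hd j) Finset.univ_nonempty
    set M := mixedNorm qU₁ qU₂ (Xhᵀ * (V - Y)) with hM
    set T := mixedNorm 1 qU₁ Xh with hT
    have hn' : (0 : ℝ) < n := by exact_mod_cast hn
    have hM0 : 0 ≤ M := ps_mnonneg _ _ _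
    have hST : S ≤ 2 * T := by
      rw [hT, mixedNorm, ps_lp1, Finset.mul_sum]
      refine Finset.sum_le_sum fun j _ => ?_
      rw [abs_of_nonneg (ps_nonneg _ _), mul_comm]
      exact mul_le_mul_of_nonneg_right (ps_diff hk hpU₂ hcU₂ V Y j (hV j) (hY j)) (ps_nonneg _ _)
    have hMop := ps_op hn hm hk Xh pU₁ pU₂ pV₁ pV₂ qU₁ qU₂ qV₁ qV₂ hpU₁ hpU₂ hcU₁ hcU₂ hcV₁ hcV₂
      (V - Y)
    have hsL : sSup {r : ℝ | ∃ U : Matrix (Fin m) (Fin k) ℝ,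
        mixedNorm pU₁ pU₂ U ≤ 1 ∧ r = mixedNorm qV₁ qV₂ (Xh * U)} = n * L := by
      rw [hL]; field_simp
    rw [hsL] at hMop
    have hL0 : 0 ≤ n * L := by
      rw [← hsL]
      apply Real.sSup_nonneg
      rintro _ ⟨U, _, rfl⟩
      exact ps_mnonneg _ _ _
    have hcV₂' : 1 / qV₂ + 1 / pV₂ = 1 := by rw [add_comm]; exact hcV₂
    have hD : mixedNorm pV₁ pV₂ (V - Y) ≤ Real.sqrt n * 2 := by
      have := ps_const hp2 (fun i => lpNorm pV₂ ((V - Y) i)) (fun i => by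
        rw [abs_of_nonneg (ps_nonneg _ _)]
        exact ps_diff hk (ps_one_le hcV₂) hcV₂' V Y i (hV i) (hY i))
      rw [Fintype.card_fin] at this
      exact this
    have hM1 : M ≤ Real.sqrt n * 2 * (n * L) := hMop.trans (mul_le_mul_of_nonneg_right hD hL0)
    have hM2 : M ^ 2 ≤ 4 * n * (n * L) ^ 2 := by
      calc M ^ 2 ≤ (Real.sqrt n * 2 * (n * L)) ^ 2 := by gcongr
        _ = (Real.sqrt n) ^ 2 * 4 * (n * L) ^ 2 := by ring
        _ = _ := by rw [Real.sq_sqrt hn'.le]; ring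
    have hS2 : S ^ 2 ≤ 4 * T ^ 2 := by nlinarith
    have hE : (∑ j, (lpNorm qU₁ (Xh j) * lpNorm qU₂ (fun l => V j l - Y j l) / S) *
          (mixedNorm qU₁ qU₂ (Xhᵀ * (V - Y) - etaPart Xh V Y
            (fun j' => lpNorm qU₁ (Xh j') * lpNorm qU₂ (fun l => V j' l - Y j' l) / S) j)) ^ 2)
          ≤ 2 * M ^ 2 + 2 * S ^ 2 := by
      have hw : ∑ j, (lpNorm qU₁ (Xh j) * lpNorm qU₂ (fun l => V j l - Y j l) / S) = 1 := by
        rw [← Finset.sum_div, ← hSdef, div_self hS.ne']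
      rw [← hO, ← one_mul (2 * M ^ 2), ← hw, Finset.sum_mul, Finset.mul_sum,
        ← Finset.sum_add_distrib]
      refine Finset.sum_le_sum fun j _ => ?_
      have ht := ps_msub hpU₁ hpU₂ hcU₁ hcU₂ (Xhᵀ * (V - Y)) (etaPart Xh V Y
            (fun j' => lpNorm qU₁ (Xh j') * lpNorm qU₂ (fun l => V j' l - Y j' l) / S) j)
      have ht0 := ps_mnonneg qU₁ qU₂ (Xhᵀ * (V - Y) - etaPart Xh V Y
            (fun j' => lpNorm qU₁ (Xh j') * lpNorm qU₂ (fun l => V j' l - Y j' l) / S) j)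
      have hwj := div_pos (hd j) hS
      rw [← hM] at ht
      generalize lpNorm qU₁ (Xh j) * lpNorm qU₂ (fun l => V j l - Y j l) / S = w at hwj ⊢
      generalize mixedNorm qU₁ qU₂ (Xhᵀ * (V - Y) - etaPart Xh V Y
            (fun j' => lpNorm qU₁ (Xh j') * lpNorm qU₂ (fun l => V j' l - Y j' l) / S) j) = a at *
      generalize mixedNorm qU₁ qU₂ (etaPart Xh V Y
            (fun j' => lpNorm qU₁ (Xh j') * lpNorm qU₂ (fun l => V j' l - Y j' l) / S) j) = b at *
      have : a ^ 2 ≤ 2 * M ^ 2 + 2 * b ^ 2 := by nlinarith [sq_nonneg (M - b)]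
      nlinarith
    calc _ ≤ (1 / (n : ℝ) ^ 2) * (2 * (4 * n * (n * L) ^ 2) + 2 * (4 * T ^ 2)) := by
          apply mul_le_mul_of_nonneg_left _ (by positivity)
          linarith
      _ = _ := by field_simp; ring
end
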